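/- Let d, t, T be natural numbers with T ≥ 2 and t ≤ T, let α ≥ 0 and β > 0 be real numbers, and let A_t, …, A_{T-1} ∈ ℝ^{d×d} be matrices with ‖A_k‖₂ ≤ m for all k. If (α/β)·m ≤ 1/T, then M = ∏_{k=t}^{T-1} (α A_k + β I) is invertible and ‖M‖₂ · ‖M⁻¹‖₂ ≤ ((T+1)/(T−1))^T ≤ 9. In particular, for this choice of α and β the condition number of M is bounded by an absolute constant independent of T. -/

import Mathlib

/-- The spectral (ℓ₂ operator) norm of a real matrix. -/
noncomputable def specNorm {m n : ℕ} (A : Matrix (Fin m) (Fin n) ℝ) : ℝ :=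
  ‖LinearMap.toContinuousLinearMap (Matrix.toEuclideanLin A)‖

/-!
The condition number `‖x‖ * ‖x⁻¹‖` is submultiplicative and invariant under nonzero scaling, so
each factor `α A + β I` may be replaced by `I + E` with `E = (α / β) A` and `‖E‖ ≤ 1 / T`. The
Neumann series bounds the condition number of `I + E` by `(1 + 1 / T) / (1 - 1 / T)`, and there are
at most `T` factors. Finally `a * log ((a + 1) / (a - 1)) = 2 ∑ a⁻²ᵏ / (2k + 1)` decreases in
`a > 1`, so `((T + 1) / (T - 1)) ^ T` is largest at `T = 2`, where it equals `9`.
-/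

open scoped Ring

theorem smul_add_smul_eq {K V : Type*} [Field K] [AddCommMonoid V] [Module K V] {c : K}
    (hc : c ≠ 0) (a : K) (x y : V) : a • x + c • y = c • (y + (a / c) • x) := by
  rw [smul_add, smul_smul, mul_div_cancel₀ _ hc, add_comm]

theorem ringInverse_smul {K R : Type*} [Field K] [Semiring R] [Algebra K R] {c : K} (hc : c ≠ 0)
    (x : R) : (c • x)⁻¹ʳ = c⁻¹ • x⁻¹ʳ := by
  have inverse_algebraMap : (algebraMap K R c)⁻¹ʳ = algebraMap K R c⁻¹ :=
    Ring.inverse_unit ((Units.mk0 c hc).map (algebraMap K R : K →* R))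
  rw [Algebra.smul_def, Ring.inverse_mul (.inl ((IsUnit.mk0 c hc).map (algebraMap K R))),
    inverse_algebraMap, Algebra.smul_def, Algebra.commutes]

/-- The condition number `‖x‖ * ‖x⁻¹‖` of an element of a normed ring. It is encoded with
`Ring.inverse`, so it is `0` when `x` is not invertible. -/
noncomputable def conditionNumber {R : Type*} [NormedRing R] (x : R) : ℝ :=
  ‖x‖ * ‖x⁻¹ʳ‖

section ConditionNumber

variable {R : Type*} [NormedRing R]

theorem conditionNumber_nonneg (x : R) : 0 ≤ conditionNumber x := by
  unfold conditionNumber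
  positivity

theorem conditionNumber_mul_le {x y : R} (h : IsUnit x ∨ IsUnit y) :
    conditionNumber (x * y) ≤ conditionNumber x * conditionNumber y := by
  unfold conditionNumber
  rw [Ring.inverse_mul h]
  calc ‖x * y‖ * ‖y⁻¹ʳ * x⁻¹ʳ‖ ≤ ‖x‖ * ‖y‖ * (‖y⁻¹ʳ‖ * ‖x⁻¹ʳ‖) := by
        gcongr <;> exact norm_mul_le _ _
    _ = ‖x‖ * ‖x⁻¹ʳ‖ * (‖y‖ * ‖y⁻¹ʳ‖) := by ring

theorem conditionNumber_smul {𝕜 : Type*} [NormedField 𝕜] [NormedAlgebra 𝕜 R] {c : 𝕜} (hc : c ≠ 0)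
    (x : R) : conditionNumber (c • x) = conditionNumber x := by
  have norm_c_ne_zero : ‖c‖ ≠ 0 := norm_ne_zero_iff.2 hc
  simp only [conditionNumber, ringInverse_smul hc, norm_smul, norm_inv]
  field_simp

-- `‖1‖ ≤ 1` takes the place of `NormOneClass`, which would exclude the zero ring and with it the
-- matrices of size `0`.
theorem conditionNumber_list_prod_le (norm_one_le : ‖(1 : R)‖ ≤ 1) {c : ℝ} {l : List R}
    (isUnit_mem : ∀ x ∈ l, IsUnit x) (le_c : ∀ x ∈ l, conditionNumber x ≤ c) :
    conditionNumber l.prod ≤ c ^ l.length := by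
  induction l with
  | nil =>
    simpa [conditionNumber] using mul_le_one₀ norm_one_le (norm_nonneg _) norm_one_le
  | cons x l ih =>
    rw [List.forall_mem_cons] at isUnit_mem le_c
    rw [List.prod_cons, List.length_cons, pow_succ']
    calc conditionNumber (x * l.prod)
        ≤ conditionNumber x * conditionNumber l.prod := conditionNumber_mul_le (.inl isUnit_mem.1)
      _ ≤ c * c ^ l.length :=
        mul_le_mul le_c.1 (ih isUnit_mem.2 le_c.2) (conditionNumber_nonneg _)
          ((conditionNumber_nonneg x).trans le_c.1)

variable [HasSummableGeomSeries R] {x : R} {ε : ℝ}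

theorem isUnit_one_add_of_norm_lt_one (hx : ‖x‖ < 1) : IsUnit (1 + x) := by
  simpa using isUnit_one_sub_of_norm_lt_one (x := -x) (by rwa [norm_neg])

theorem norm_ringInverse_one_add_le (norm_one_le : ‖(1 : R)‖ ≤ 1) (hx : ‖x‖ < 1) :
    ‖(1 + x)⁻¹ʳ‖ ≤ (1 - ‖x‖)⁻¹ := by
  have norm_neg_lt : ‖-x‖ < 1 := by rwa [norm_neg]
  have neumann : ‖(1 - -x)⁻¹ʳ‖ ≤ ‖(1 : R)‖ - 1 + (1 - ‖-x‖)⁻¹ := by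
    rw [← geom_series_eq_inverse _ norm_neg_lt]
    exact tsum_geometric_le_of_norm_lt_one _ norm_neg_lt
  rw [sub_neg_eq_add, norm_neg] at neumann
  linarith

theorem conditionNumber_one_add_le (norm_one_le : ‖(1 : R)‖ ≤ 1) (hx : ‖x‖ ≤ ε) (hε : ε < 1) :
    conditionNumber (1 + x) ≤ (1 + ε) / (1 - ε) := by
  have norm_one_add_le : ‖1 + x‖ ≤ 1 + ε := norm_add_le_of_le norm_one_le hx
  have norm_inverse_le : ‖(1 + x)⁻¹ʳ‖ ≤ (1 - ε)⁻¹ :=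
    (norm_ringInverse_one_add_le norm_one_le (hx.trans_lt hε)).trans <|
      inv_anti₀ (sub_pos.2 hε) (sub_le_sub_left hx 1)
  rw [div_eq_mul_inv]
  exact mul_le_mul norm_one_add_le norm_inverse_le (norm_nonneg _)
    ((norm_nonneg _).trans norm_one_add_le)

variable {𝕜 : Type*} [NormedField 𝕜] [NormedAlgebra 𝕜 R] {α β : 𝕜}

theorem isUnit_smul_add_smul_one (hβ : β ≠ 0) (hx : ‖α‖ / ‖β‖ * ‖x‖ < 1) :
    IsUnit (α • x + β • (1 : R)) := by
  rw [smul_add_smul_eq hβ]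
  have isUnit_one_add : IsUnit (1 + (α / β) • x) :=
    isUnit_one_add_of_norm_lt_one (by rwa [norm_smul, norm_div])
  exact isUnit_one_add.smul (Units.mk0 β hβ)

theorem conditionNumber_smul_add_smul_one_le (norm_one_le : ‖(1 : R)‖ ≤ 1) (hβ : β ≠ 0)
    (hx : ‖α‖ / ‖β‖ * ‖x‖ ≤ ε) (hε : ε < 1) :
    conditionNumber (α • x + β • (1 : R)) ≤ (1 + ε) / (1 - ε) := by
  rw [smul_add_smul_eq hβ, conditionNumber_smul hβ]
  exact conditionNumber_one_add_le norm_one_le (by rwa [norm_smul, norm_div]) hε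

end ConditionNumber

theorem hasSum_mul_log_add_one_div_sub_one {a : ℝ} (ha : 1 < a) :
    HasSum (fun k : ℕ ↦ 2 / (2 * k + 1) * a⁻¹ ^ (2 * k)) (a * Real.log ((a + 1) / (a - 1))) := by
  have a_pos : 0 < a := by linarith
  have inv_lt_one : a⁻¹ < 1 := inv_lt_one_of_one_lt₀ ha
  have abs_inv_lt_one : |a⁻¹| < 1 := by rwa [abs_of_pos (inv_pos.2 a_pos)]
  have log_eq : Real.log ((a + 1) / (a - 1)) = Real.log (1 + a⁻¹) - Real.log (1 - a⁻¹) := by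
    rw [← Real.log_div (by positivity) (sub_pos.2 inv_lt_one).ne']
    congr 1
    field_simp
  rw [log_eq]
  convert! (Real.hasSum_log_sub_log_of_abs_lt_one abs_inv_lt_one).mul_left a using 2 with k
  rw [pow_succ]
  field_simp

theorem antitoneOn_add_one_div_sub_one_rpow :
    AntitoneOn (fun a : ℝ ↦ ((a + 1) / (a - 1)) ^ a) (Set.Ioi 1) := by
  intro a (ha : 1 < a) b (hb : 1 < b) hab
  have ratio_pos {c : ℝ} (hc : 1 < c) : 0 < (c + 1) / (c - 1) :=
    div_pos (by linarith) (sub_pos.2 hc)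
  have mul_log_le : b * Real.log ((b + 1) / (b - 1)) ≤ a * Real.log ((a + 1) / (a - 1)) :=
    hasSum_le (fun k ↦ by gcongr) (hasSum_mul_log_add_one_div_sub_one hb)
      (hasSum_mul_log_add_one_div_sub_one ha)
  simpa only [Real.rpow_def_of_pos (ratio_pos ha), Real.rpow_def_of_pos (ratio_pos hb), mul_comm,
    Real.exp_le_exp] using mul_log_le

theorem add_one_div_sub_one_pow_le_nine {T : ℕ} (hT : 2 ≤ T) :
    (((T : ℝ) + 1) / ((T : ℝ) - 1)) ^ T ≤ 9 := by
  have two_le : (2 : ℝ) ≤ T := by exact_mod_cast hT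
  calc (((T : ℝ) + 1) / ((T : ℝ) - 1)) ^ T
      = (((T : ℝ) + 1) / ((T : ℝ) - 1)) ^ (T : ℝ) := (Real.rpow_natCast _ T).symm
    _ ≤ ((2 + 1) / (2 - 1)) ^ (2 : ℝ) :=
      antitoneOn_add_one_div_sub_one_rpow (Set.mem_Ioi.2 one_lt_two)
        (Set.mem_Ioi.2 (one_lt_two.trans_le two_le)) two_le
    _ = 9 := by norm_num

theorem fastRNN_gradient_factor_well_conditioned_general {𝕜 R : Type*} [NormedField 𝕜]
    [NormedRing R] [NormedAlgebra 𝕜 R] [HasSummableGeomSeries R] (norm_one_le : ‖(1 : R)‖ ≤ 1)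
    (t T : ℕ) (hT : 2 ≤ T) (α β : 𝕜) (hβ : β ≠ 0) (m : ℝ) (A : ℕ → R)
    (hA : ∀ k, t ≤ k → k < T → ‖A k‖ ≤ m) (hm : ‖α‖ / ‖β‖ * m ≤ 1 / (T : ℝ)) :
    let M := ((List.Ico t T).map (fun k ↦ α • A k + β • (1 : R))).prod
    IsUnit M ∧
      conditionNumber M ≤ (((T : ℝ) + 1) / ((T : ℝ) - 1)) ^ T ∧
      (((T : ℝ) + 1) / ((T : ℝ) - 1)) ^ T ≤ 9 := by
  intro M
  have one_lt : (1 : ℝ) < T := by exact_mod_cast hT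
  have inv_lt_one : 1 / (T : ℝ) < 1 := (div_lt_one (by linarith)).2 one_lt
  have ratio_eq : (1 + 1 / (T : ℝ)) / (1 - 1 / T) = (T + 1) / (T - 1) := by field_simp
  have one_le_ratio : 1 ≤ ((T : ℝ) + 1) / ((T : ℝ) - 1) :=
    (one_le_div (sub_pos.2 one_lt)).2 (by linarith)
  have ratio_norm_le (k : ℕ) (hk : k ∈ List.Ico t T) : ‖α‖ / ‖β‖ * ‖A k‖ ≤ 1 / T := by
    obtain ⟨htk, hkT⟩ := List.Ico.mem.1 hk
    exact (mul_le_mul_of_nonneg_left (hA k htk hkT) (by positivity)).trans hm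
  have isUnit_factor : ∀ x ∈ (List.Ico t T).map (fun k ↦ α • A k + β • (1 : R)), IsUnit x :=
    List.forall_mem_map.2 fun k hk ↦
      isUnit_smul_add_smul_one hβ ((ratio_norm_le k hk).trans_lt inv_lt_one)
  have factor_le : ∀ x ∈ (List.Ico t T).map (fun k ↦ α • A k + β • (1 : R)),
      conditionNumber x ≤ ((T : ℝ) + 1) / ((T : ℝ) - 1) :=
    List.forall_mem_map.2 fun k hk ↦ ratio_eq ▸
      conditionNumber_smul_add_smul_one_le norm_one_le hβ (ratio_norm_le k hk) inv_lt_one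
  refine ⟨List.prod_isUnit isUnit_factor, ?_, add_one_div_sub_one_pow_le_nine hT⟩
  calc conditionNumber M ≤ (((T : ℝ) + 1) / ((T : ℝ) - 1)) ^ (T - t) := by
        simpa only [List.length_map, List.Ico.length] using
          conditionNumber_list_prod_le norm_one_le isUnit_factor factor_le
    _ ≤ (((T : ℝ) + 1) / ((T : ℝ) - 1)) ^ T := pow_le_pow_right₀ one_le_ratio (Nat.sub_le T t)

section SpecNorm

open scoped Matrix.Norms.L2Operator

theorem specNorm_eq_norm {m n : ℕ} (A : Matrix (Fin m) (Fin n) ℝ) : specNorm A = ‖A‖ := rfl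

theorem l2_opNorm_one_le {𝕜 n : Type*} [RCLike 𝕜] [Fintype n] [DecidableEq n] :
    ‖(1 : Matrix n n 𝕜)‖ ≤ 1 := by
  rw [Matrix.cstar_norm_def, map_one]
  exact ContinuousLinearMap.norm_id_le

theorem conditionNumber_eq_specNorm_mul {n : ℕ} (A : Matrix (Fin n) (Fin n) ℝ) :
    conditionNumber A = specNorm A * specNorm A⁻¹ := by
  rw [conditionNumber, specNorm_eq_norm, specNorm_eq_norm, Matrix.nonsing_inv_eq_ringInverse]

end SpecNorm

/-- For `T ≥ 2`, `t ≤ T`, `α ≥ 0`, `β > 0` and matrices `A_t, …, A_{T-1}`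
with `‖A_k‖₂ ≤ m`, if `(α/β)·m ≤ 1/T` then `M = ∏_{k=t}^{T-1} (α A_k + β I)` is invertible
and `‖M‖₂ ‖M⁻¹‖₂ ≤ ((T+1)/(T−1))^T ≤ 9`: the condition number of the FastRNN gradient
factor is bounded by an absolute constant independent of `T`. -/
theorem fastRNN_gradient_factor_well_conditioned
    (d t T : ℕ) (hT : 2 ≤ T) (htT : t ≤ T) (α β m : ℝ) (hα : 0 ≤ α) (hβ : 0 < β)
    (A : ℕ → Matrix (Fin d) (Fin d) ℝ)
    (hA : ∀ k, t ≤ k → k < T → specNorm (A k) ≤ m)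
    (hm : α / β * m ≤ 1 / (T : ℝ)) :
    let M := ((List.Ico t T).map
      (fun k => α • A k + β • (1 : Matrix (Fin d) (Fin d) ℝ))).prod
    IsUnit M ∧
      specNorm M * specNorm M⁻¹ ≤ (((T : ℝ) + 1) / ((T : ℝ) - 1)) ^ T ∧
      (((T : ℝ) + 1) / ((T : ℝ) - 1)) ^ T ≤ 9 := by
  open scoped Matrix.Norms.L2Operator in
  simpa only [conditionNumber_eq_specNorm_mul] using
    fastRNN_gradient_factor_well_conditioned_general l2_opNorm_one_le t T hT α β
      hβ.ne' m A hA (by rwa [Real.norm_of_nonneg hα, Real.norm_of_nonneg hβ.le])
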